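/- The saturation number of S_3 satisfies liminf_{n→∞} sat_○(n, S_3)/n ≥ 3/2; that is, sat_○(n, S_3) ≥ 3n/2 + o(n). -/

import Mathlib

/-!
A 3-cgh is `S_3`-free exactly when, for every vertex `v`, the link graph of `v` (drawn on the
remaining points in convex position) has no two crossing edges.

*Lower bound.* A triple of consecutive points `a, a+1, a+2` can never create a crossing, because
the opposite side of each of its vertices joins neighbouring points of the link. Hence a saturated
`H` contains all of them. The triple `{a, a+1, a+3}` is either in `H` or creates a crossing, and
the crossing edge of `H` must then contain `{a, a+2}` or `{a+1, a+2}` and a point outside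
`[a, a+3]`; the reflected statement holds for `{a, a+2, a+3}`. So every window `[a, a+3]` is served
twice by non-consecutive edges of `H`, while a non-consecutive edge serves at most four times in
total (`served_card`). This yields about `n / 2` further edges, so `2 |H| + 7 ≥ 3 n`. Only windows
that do not wrap around `n - 1, 0` are used, which costs the additive constant.

*Upper bound.* The real-valued `liminf` is a supremum and would take a junk value if
`sat(n, S_3) / n` tended to infinity, so a linear upper bound is needed as well. Take all triples
`{0, i, i+1}` and `{0, 1, i}`. This family is `S_3`-free, and every `S_3`-free family containing
it is contained in its union with the consecutive triples. A maximal `S_3`-free extension is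
therefore saturated and has at most `3 n` edges.
-/


open Finset

/-- An abstract convex geometric hypergraph: `m` vertices on a circle, with the
cyclic ordering `0 < 1 < ⋯ < m-1 < 0`, together with a family of edges. -/
structure CGH where
  m : ℕ
  edges : Finset (Finset (Fin m))

/-- A list of points of `Fin n` is in (strict) cyclic order if some rotation of it
is strictly increasing in the linear order of `Fin n`. -/
def CyclicSorted {n : ℕ} (l : List (Fin n)) : Prop :=
  ∃ k : ℕ, (l.rotate k).Chain' (· < ·)

/-- `H` contains a subhypergraph isomorphic to the convex geometric hypergraph `F`:
there is an injection of the vertices of `F` into `Fin n` respecting the cyclic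
orderings and sending every edge of `F` to an edge of `H`. -/
def HasCopy (F : CGH) {n : ℕ} (H : Finset (Finset (Fin n))) : Prop :=
  ∃ f : Fin F.m → Fin n, Function.Injective f ∧ CyclicSorted (List.ofFn f) ∧
    ∀ e ∈ F.edges, e.image f ∈ H

/-- `H` is an `F`-saturated `r`-uniform convex geometric hypergraph on `Fin n`. -/
def IsSat (F : CGH) (r : ℕ) {n : ℕ} (H : Finset (Finset (Fin n))) : Prop :=
  (∀ h ∈ H, h.card = r) ∧ ¬ HasCopy F H ∧
    ∀ e : Finset (Fin n), e.card = r → e ∉ H → HasCopy F (insert e H)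

/-- The saturation number `sat_○(n, F)` for `r`-uniform cgh's on `Fin n`. -/
noncomputable def satNum (F : CGH) (r n : ℕ) : ℕ :=
  sInf {k | ∃ H : Finset (Finset (Fin n)), IsSat F r H ∧ H.card = k}

/-- `M_1^{(r)}`: two geometrically disjoint `r`-tuples. -/
def M1r (r : ℕ) : CGH where
  m := 2 * r
  edges := {Finset.univ.filter (fun i : Fin (2 * r) => (i : ℕ) < r),
            Finset.univ.filter (fun i : Fin (2 * r) => r ≤ (i : ℕ))}

def M1cgh : CGH := ⟨6, {({0, 1, 2} : Finset (Fin 6)), ({3, 4, 5} : Finset (Fin 6))}⟩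
def M2cgh : CGH := ⟨6, {({0, 1, 3} : Finset (Fin 6)), ({2, 4, 5} : Finset (Fin 6))}⟩
def M3cgh : CGH := ⟨6, {({0, 2, 4} : Finset (Fin 6)), ({1, 3, 5} : Finset (Fin 6))}⟩
def S1cgh : CGH := ⟨5, {({0, 1, 4} : Finset (Fin 5)), ({0, 2, 3} : Finset (Fin 5))}⟩
def S2cgh : CGH := ⟨5, {({0, 1, 2} : Finset (Fin 5)), ({0, 3, 4} : Finset (Fin 5))}⟩
def S3cgh : CGH := ⟨5, {({0, 1, 3} : Finset (Fin 5)), ({0, 2, 4} : Finset (Fin 5))}⟩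
def D1cgh : CGH := ⟨4, {({0, 1, 2} : Finset (Fin 4)), ({0, 2, 3} : Finset (Fin 4))}⟩
def D2cgh : CGH := ⟨4, {({0, 1, 2} : Finset (Fin 4)), ({0, 1, 3} : Finset (Fin 4))}⟩

/-- The closed clockwise arc `[a, b]` in `Fin n`. -/
def arcCC {n : ℕ} (a b : Fin n) : Finset (Fin n) :=
  if a ≤ b then Finset.univ.filter (fun x => a ≤ x ∧ x ≤ b)
  else Finset.univ.filter (fun x => a ≤ x ∨ x ≤ b)

/-- The open clockwise arc `(a, b)` in `Fin n`. -/
def arcOO {n : ℕ} (a b : Fin n) : Finset (Fin n) :=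
  if a < b then Finset.univ.filter (fun x => a < x ∧ x < b)
  else Finset.univ.filter (fun x => a < x ∨ x < b)

/-- The tuple `(w_1, …, w_{2ℓ+1})` (`0`-indexed here) consists of distinct points with
`w_1 < w_3 < ⋯ < w_{2ℓ+1} < w_2 < w_4 < ⋯ < w_{2ℓ} < w_1` in the cyclic order. -/
def SemiValid {n : ℕ} (ℓ : ℕ) (w : Fin (2 * ℓ + 1) → Fin n) : Prop :=
  Function.Injective w ∧
    CyclicSorted (List.ofFn fun p : Fin (2 * ℓ + 1) =>
      w ⟨(2 * (p : ℕ)) % (2 * ℓ + 1), Nat.mod_lt _ (by omega)⟩)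

/-- A semi-valid tuple is `r`-valid if moreover `|[w_i, w_{i-1}]| ≥ r` for all `i`. -/
def RValid {n : ℕ} (r ℓ : ℕ) (w : Fin (2 * ℓ + 1) → Fin n) : Prop :=
  SemiValid ℓ w ∧ ∀ i : Fin (2 * ℓ + 1), r ≤ (arcCC (w i) (w (i - 1))).card

/-- `H_n^{(r)}(C)`: all `r`-sets meeting every interval `[w_i, w_{i-1}]`. -/
def HnC {n : ℕ} (r ℓ : ℕ) (w : Fin (2 * ℓ + 1) → Fin n) : Finset (Finset (Fin n)) :=
  (Finset.powersetCard r Finset.univ).filter fun e =>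
    ∀ i : Fin (2 * ℓ + 1), (e ∩ arcCC (w i) (w (i - 1))).Nonempty

/-- `j` is the vertex `λ(v)` for `v` in `H`. -/
def IsLam {n : ℕ} [NeZero n] (H : Finset (Finset (Fin n))) (v j : Fin n) : Prop :=
  (∃ h ∈ H, v ∈ h ∧ h ⊆ arcCC j v) ∧ ¬ ∃ h ∈ H, v ∈ h ∧ h ⊆ arcCC (j + 1) v

/-- `j` is the vertex `ρ(v)` for `v` in `H`. -/
def IsRho {n : ℕ} [NeZero n] (H : Finset (Finset (Fin n))) (v j : Fin n) : Prop :=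
  (∃ h ∈ H, v ∈ h ∧ h ⊆ arcCC v j) ∧ ¬ ∃ h ∈ H, v ∈ h ∧ h ⊆ arcCC v (j - 1)

noncomputable def lamF {n : ℕ} [NeZero n] (H : Finset (Finset (Fin n))) (v : Fin n) : Fin n :=
  letI := Classical.propDecidable (∃ j, IsLam H v j)
  if h : ∃ j, IsLam H v j then h.choose else v

noncomputable def rhoF {n : ℕ} [NeZero n] (H : Finset (Finset (Fin n))) (v : Fin n) : Fin n :=
  letI := Classical.propDecidable (∃ j, IsRho H v j)
  if h : ∃ j, IsRho H v j then h.choose else v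

/-- Strict cyclic betweenness on `Fin n`. -/
def CyclicSbtw {n : ℕ} (a b c : Fin n) : Prop :=
  (a < b ∧ b < c) ∨ (b < c ∧ c < a) ∨ (c < a ∧ a < b)

/-- Isomorphism of two cgh's on `Fin n`: a bijection of the vertex set respecting the
cyclic order and inducing a bijection of the edge sets. -/
def CGHIso {n : ℕ} (H H' : Finset (Finset (Fin n))) : Prop :=
  ∃ g : Fin n ≃ Fin n,
    (∀ a b c : Fin n, CyclicSbtw a b c → CyclicSbtw (g a) (g b) (g c)) ∧
    ∀ e : Finset (Fin n), e ∈ H ↔ e.image g ∈ H'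

/-- The 3-cgh `H_n^{(3)}`: all triples containing `v_0`, together with all triples
containing one of the pairs `{v_1, v_{n-2}}`, `{v_1, v_{n-1}}`, `{v_2, v_{n-1}}`. -/
def Hn3 (n : ℕ) (hn : 6 ≤ n) : Finset (Finset (Fin n)) :=
  (Finset.powersetCard 3 Finset.univ).filter fun e =>
    (⟨0, by omega⟩ : Fin n) ∈ e ∨
    ((⟨1, by omega⟩ : Fin n) ∈ e ∧ (⟨n - 2, by omega⟩ : Fin n) ∈ e) ∨
    ((⟨1, by omega⟩ : Fin n) ∈ e ∧ (⟨n - 1, by omega⟩ : Fin n) ∈ e) ∨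
    ((⟨2, by omega⟩ : Fin n) ∈ e ∧ (⟨n - 1, by omega⟩ : Fin n) ∈ e)

/-- Saturation with respect to a family of cgh's. -/
def FamSat (ℱ : Set CGH) (r : ℕ) {n : ℕ} (H : Finset (Finset (Fin n))) : Prop :=
  (∀ h ∈ H, h.card = r) ∧ (∀ F ∈ ℱ, ¬ HasCopy F H) ∧
    ∀ e : Finset (Fin n), e.card = r → e ∉ H → ∃ F ∈ ℱ, HasCopy F (insert e H)

noncomputable def famSatNum (ℱ : Set CGH) (r n : ℕ) : ℕ :=
  sInf {k | ∃ H : Finset (Finset (Fin n)), FamSat ℱ r H ∧ H.card = k}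

/-- Rotation of a point of `Fin n` by an integer amount `m`. -/
def finShift {n : ℕ} (hn : 0 < n) (v : Fin n) (m : ℤ) : Fin n :=
  ⟨(((v : ℤ) + m) % (n : ℤ)).toNat, by
    have h0 : (0 : ℤ) < (n : ℤ) := by exact_mod_cast hn
    have h1 := Int.emod_nonneg ((v : ℤ) + m) (by omega : (n : ℤ) ≠ 0)
    have h2 := Int.emod_lt_of_pos ((v : ℤ) + m) h0
    omega⟩

/-- The tuple `w` is `(i,k)`-consecutive: starting from position `i`, the entries at
positions `i, i+2, …, i+2(k-1)` are `k` consecutive points `v_j, v_{j+1}, …, v_{j+k-1}`. -/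
def ConsecAt {n ℓ : ℕ} (hn : 0 < n) (w : Fin (2 * ℓ + 1) → Fin n)
    (i : Fin (2 * ℓ + 1)) (k : ℕ) : Prop :=
  ∃ j : Fin n, ∀ s : ℕ, s < k →
    w (i + ⟨(2 * s) % (2 * ℓ + 1), Nat.mod_lt _ (by omega)⟩) = finShift hn j s

/-- The tuple `C_{i,k,m}`: the `k` consecutive points at positions `i, i+2, …, i+2(k-1)`
are rotated by `m` units; all other entries are unchanged. -/
def shiftTuple {n ℓ : ℕ} (hn : 0 < n) (w : Fin (2 * ℓ + 1) → Fin n)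
    (i : Fin (2 * ℓ + 1)) (k : ℕ) (m : ℤ) : Fin (2 * ℓ + 1) → Fin n :=
  fun p => if (p - i).val % 2 = 0 ∧ (p - i).val / 2 < k then finShift hn (w p) m else w p

/-! ### Nat-valued coordinates for triples and copies -/

/-- The subset of `Fin n` consisting of the points with values `p`, `q`, `r`. -/
def mk3 (n p q r : ℕ) : Finset (Fin n) :=
  univ.filter fun x => x.val = p ∨ x.val = q ∨ x.val = r

/-- Five natural numbers in strict cyclic order: some rotation is strictly increasing. -/
def Cyc5 (a b c d e : ℕ) : Prop :=
  (a < b ∧ b < c ∧ c < d ∧ d < e) ∨ (b < c ∧ c < d ∧ d < e ∧ e < a) ∨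
  (c < d ∧ d < e ∧ e < a ∧ a < b) ∨ (d < e ∧ e < a ∧ a < b ∧ b < c) ∨
  (e < a ∧ a < b ∧ b < c ∧ c < d)

lemma mem_mk3 {n p q r : ℕ} {x : Fin n} :
    x ∈ mk3 n p q r ↔ x.val = p ∨ x.val = q ∨ x.val = r := by
  simp [mk3]

lemma mk3_rot (n p q r : ℕ) : mk3 n p q r = mk3 n q r p := by
  ext x; simp only [mem_mk3]; tauto

lemma mk3_swap (n p q r : ℕ) : mk3 n p q r = mk3 n q p r := by
  ext x; simp only [mem_mk3]; tauto

lemma mk3_comm (n p q r : ℕ) : mk3 n p q r = mk3 n p r q := by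
  ext x; simp only [mem_mk3]; tauto

lemma mk3_card {n p q r : ℕ} (hpq : p < q) (hqr : q < r) (hr : r < n) :
    (mk3 n p q r).card = 3 := by
  rw [Finset.card_eq_three]
  refine ⟨⟨p, by omega⟩, ⟨q, by omega⟩, ⟨r, hr⟩, ?_, ?_, ?_, ?_⟩
  · simp; omega
  · simp; omega
  · simp; omega
  · ext x; simp [mem_mk3, Fin.ext_iff]

lemma exists_mk3 {n : ℕ} {e : Finset (Fin n)} (he : e.card = 3) :
    ∃ p q r, p < q ∧ q < r ∧ r < n ∧ e = mk3 n p q r := by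
  obtain ⟨x, y, z, hxy, hxz, hyz, rfl⟩ := Finset.card_eq_three.1 he
  have h : ({x, y, z} : Finset (Fin n)) = mk3 n x y z := by
    ext w; simp [mem_mk3, Fin.ext_iff]
  rw [Ne, Fin.ext_iff] at hxy hxz hyz
  have hx := x.2
  have hy := y.2
  have hz := z.2
  rw [h]
  rcases lt_or_gt_of_ne hxy with h1 | h1 <;> rcases lt_or_gt_of_ne hxz with h2 | h2 <;>
    rcases lt_or_gt_of_ne hyz with h3 | h3
  · exact ⟨x, y, z, h1, h3, hz, rfl⟩
  · exact ⟨x, z, y, h2, h3, hy, mk3_comm ..⟩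
  · omega
  · exact ⟨z, x, y, h2, h1, hy, by rw [mk3_rot, mk3_rot]⟩
  · exact ⟨y, x, z, h1, h2, hz, mk3_swap ..⟩
  · omega
  · exact ⟨y, z, x, h3, h2, hx, mk3_rot ..⟩
  · exact ⟨z, y, x, h3, h1, hx, by rw [mk3_rot, mk3_swap]⟩

lemma mk3_inj {n p q r p' q' r' : ℕ} (hpq : p < q) (hqr : q < r) (hr : r < n)
    (hpq' : p' < q') (hqr' : q' < r') (h : mk3 n p q r = mk3 n p' q' r') :
    p = p' ∧ q = q' ∧ r = r' := by
  have key : ∀ x, x < n → ((x = p ∨ x = q ∨ x = r) ↔ (x = p' ∨ x = q' ∨ x = r')) := by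
    intro x hx
    have := Finset.ext_iff.1 h ⟨x, hx⟩
    simpa only [mem_mk3] using this
  have h1 := key p (by omega)
  have h2 := key q (by omega)
  have h3 := key r (by omega)
  omega

/-- A copy of `S_3` is a cyclically ordered 5-tuple with both prescribed triples in `H`. -/
lemma hasCopy_iff {n : ℕ} (H : Finset (Finset (Fin n))) :
    HasCopy S3cgh H ↔ ∃ a b c d e : ℕ, a < n ∧ b < n ∧ c < n ∧ d < n ∧ e < n ∧
      Cyc5 a b c d e ∧ mk3 n a b d ∈ H ∧ mk3 n a c e ∈ H := by
  constructor
  · rintro ⟨f, -, ⟨k, hk⟩, hE⟩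
    change Fin 5 → Fin n at f
    refine ⟨f 0, f 1, f 2, f 3, f 4, (f 0).2, (f 1).2, (f 2).2, (f 3).2, (f 4).2, ?_, ?_, ?_⟩
    · have hl : List.ofFn f = [f 0, f 1, f 2, f 3, f 4] := by
        simp [List.ofFn_succ]
      change List.IsChain _ ((List.ofFn f).rotate k) at hk
      rw [hl, ← List.rotate_mod] at hk
      have hk5 : k % 5 < 5 := Nat.mod_lt _ (by norm_num)
      simp only [List.length_cons, List.length_nil, Nat.zero_add, Nat.reduceAdd] at hk
      unfold Cyc5
      generalize k % 5 = j at *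
      interval_cases j <;> simp [List.rotate] at hk <;> omega
    · have := hE ({0, 1, 3} : Finset (Fin 5)) (Finset.mem_insert_self _ _)
      change Finset.image f _ ∈ H at this
      convert this using 1
      ext x; simp [mem_mk3, Fin.ext_iff]
    · have := hE ({0, 2, 4} : Finset (Fin 5))
        (Finset.mem_insert_of_mem (Finset.mem_singleton_self _))
      change Finset.image f _ ∈ H at this
      convert this using 1
      ext x; simp [mem_mk3, Fin.ext_iff]
  · rintro ⟨a, b, c, d, e, ha, hb, hc, hd, he, hcyc, h1, h2⟩
    let f : Fin 5 → Fin n := ![⟨a, ha⟩, ⟨b, hb⟩, ⟨c, hc⟩, ⟨d, hd⟩, ⟨e, he⟩]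
    have hl : List.ofFn f = [⟨a, ha⟩, ⟨b, hb⟩, ⟨c, hc⟩, ⟨d, hd⟩, ⟨e, he⟩] := by
      simp [List.ofFn_succ, f]
    refine ⟨f, ?_, ?_, ?_⟩
    · change Function.Injective f
      rw [← List.nodup_ofFn, hl]
      unfold Cyc5 at hcyc
      simp
      omega
    · change ∃ k : ℕ, List.IsChain _ ((List.ofFn f).rotate k)
      rw [hl]
      rcases hcyc with h | h | h | h | h
      · exact ⟨0, by simp [List.rotate]; omega⟩
      · exact ⟨1, by simp [List.rotate]; omega⟩
      · exact ⟨2, by simp [List.rotate]; omega⟩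
      · exact ⟨3, by simp [List.rotate]; omega⟩
      · exact ⟨4, by simp [List.rotate]; omega⟩
    · intro s hs
      change Finset (Fin 5) at s
      change s ∈ ({{0, 1, 3}, {0, 2, 4}} : Finset (Finset (Fin 5))) at hs
      change Finset.image f s ∈ H
      rw [Finset.mem_insert, Finset.mem_singleton] at hs
      rcases hs with rfl | rfl
      · convert h1 using 1
        ext x; simp [mem_mk3, Fin.ext_iff, eq_comm, f]
      · convert h2 using 1
        ext x; simp [mem_mk3, Fin.ext_iff, eq_comm, f]

/-! ### Lower bound -/

/-- If a triple is missing from a saturated family, it forms a copy of `S_3` with an edge. -/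
lemma IsSat.cross {n : ℕ} {H : Finset (Finset (Fin n))} (hH : IsSat S3cgh 3 H) {p q r : ℕ}
    (hpq : p < q) (hqr : q < r) (hr : r < n) (h : mk3 n p q r ∉ H) :
    ∃ a b c d e : ℕ, a < n ∧ b < n ∧ c < n ∧ d < n ∧ e < n ∧ Cyc5 a b c d e ∧
      ((mk3 n a b d = mk3 n p q r ∧ mk3 n a c e ∈ H) ∨
       (mk3 n a c e = mk3 n p q r ∧ mk3 n a b d ∈ H)) := by
  obtain ⟨a, b, c, d, e, ha, hb, hc, hd, he, hcyc, h1, h2⟩ :=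
    (hasCopy_iff _).1 (hH.2.2 _ (mk3_card hpq hqr hr) h)
  refine ⟨a, b, c, d, e, ha, hb, hc, hd, he, hcyc, ?_⟩
  rw [Finset.mem_insert] at h1 h2
  rcases h1 with h1 | h1 <;> rcases h2 with h2 | h2
  · exfalso
    -- the two triples of a copy are distinct: `b` lies only in the first
    have hb' : (⟨b, hb⟩ : Fin n) ∈ mk3 n a c e := by
      rw [h2.trans h1.symm, mem_mk3]; simp
    rw [mem_mk3] at hb'
    unfold Cyc5 at hcyc
    simp only at hb'
    omega
  · exact Or.inl ⟨h1, h2⟩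
  · exact Or.inr ⟨h2, h1⟩
  · exact absurd ((hasCopy_iff _).2 ⟨a, b, c, d, e, ha, hb, hc, hd, he, hcyc, h1, h2⟩) hH.2.1

/-- The missing triple `{p, q, r}` has a vertex `a`, with opposite side `{b, d}`, whose link
in `H` contains an edge `{y, z}` crossing `{b, d}`. -/
lemma IsSat.cross' {n : ℕ} {H : Finset (Finset (Fin n))} (hH : IsSat S3cgh 3 H) {p q r : ℕ}
    (hpq : p < q) (hqr : q < r) (hr : r < n) (h : mk3 n p q r ∉ H) :
    ∃ a b d y z : ℕ, y < n ∧ z < n ∧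
      ((a = p ∧ b = q ∧ d = r) ∨ (a = q ∧ b = r ∧ d = p) ∨ (a = r ∧ b = p ∧ d = q)) ∧
      (Cyc5 a b y d z ∨ Cyc5 a z b y d) ∧ mk3 n a y z ∈ H := by
  have mem : ∀ a b d : ℕ, a < n → b < n → d < n → mk3 n a b d = mk3 n p q r →
      (a = p ∨ a = q ∨ a = r) ∧ (b = p ∨ b = q ∨ b = r) ∧ (d = p ∨ d = q ∨ d = r) := by
    intro a b d ha hb hd h1
    have key : ∀ x : Fin n, x ∈ mk3 n a b d → x.val = p ∨ x.val = q ∨ x.val = r := by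
      intro x hx
      rwa [h1, mem_mk3] at hx
    exact ⟨key ⟨a, ha⟩ (by simp [mem_mk3]), key ⟨b, hb⟩ (by simp [mem_mk3]),
      key ⟨d, hd⟩ (by simp [mem_mk3])⟩
  obtain ⟨a, b, c, d, e, ha, hb, hc, hd, he, hcyc, h1⟩ := hH.cross hpq hqr hr h
  rcases h1 with ⟨h1, h2⟩ | ⟨h1, h2⟩
  · refine ⟨a, b, d, c, e, hc, he, ?_, Or.inl hcyc, h2⟩
    obtain ⟨m1, m2, m3⟩ := mem a b d ha hb hd h1
    unfold Cyc5 at hcyc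
    rcases m1 with rfl | rfl | rfl <;> omega
  · refine ⟨a, c, e, d, b, hd, hb, ?_, Or.inr hcyc, ?_⟩
    · obtain ⟨m1, m2, m3⟩ := mem a c e ha hc he h1
      unfold Cyc5 at hcyc
      rcases m1 with rfl | rfl | rfl <;> omega
    · rwa [mk3_comm]

lemma IsSat.consecutive {n : ℕ} {H : Finset (Finset (Fin n))} (hH : IsSat S3cgh 3 H) {a : ℕ}
    (ha : a + 2 < n) : mk3 n a (a + 1) (a + 2) ∈ H := by
  by_contra h
  obtain ⟨x, b, d, y, z, hy, hz, hx, hc, -⟩ := hH.cross' (by omega) (by omega) ha h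
  unfold Cyc5 at hc
  omega

/-- The triple `{p < q < r}` equals `{a, a+1, a+3}`, or it contains `{a, a+2}` or `{a+1, a+2}`
together with a point outside `[a, a+3]`, so that adding `{a, a+1, a+3}` creates a copy of `S_3`. -/
def ServesL (a p q r : ℕ) : Prop :=
  (p = a ∧ q = a + 1 ∧ r = a + 3) ∨ (p = a ∧ q = a + 2 ∧ a + 4 ≤ r) ∨ (q = a ∧ r = a + 2) ∨
  (p = a + 1 ∧ q = a + 2 ∧ a + 4 ≤ r) ∨ (q = a + 1 ∧ r = a + 2 ∧ p < a)

/-- The triple `{p < q < r}` equals `{a, a+2, a+3}`, or it contains `{a+1, a+3}` or `{a+1, a+2}`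
together with a point outside `[a, a+3]`, so that adding `{a, a+2, a+3}` creates a copy of `S_3`. -/
def ServesR (a p q r : ℕ) : Prop :=
  (p = a ∧ q = a + 2 ∧ r = a + 3) ∨ (p = a + 1 ∧ q = a + 3) ∨ (q = a + 1 ∧ r = a + 3 ∧ p < a) ∨
  (p = a + 1 ∧ q = a + 2 ∧ a + 4 ≤ r) ∨ (q = a + 1 ∧ r = a + 2 ∧ p < a)

instance (a p q r : ℕ) : Decidable (ServesL a p q r) := by unfold ServesL; infer_instance
instance (a p q r : ℕ) : Decidable (ServesR a p q r) := by unfold ServesR; infer_instance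

lemma IsSat.servesL {n : ℕ} {H : Finset (Finset (Fin n))} (hH : IsSat S3cgh 3 H) {a : ℕ}
    (ha : a + 3 < n) :
    ∃ p q r, p < q ∧ q < r ∧ r < n ∧ mk3 n p q r ∈ H ∧ ServesL a p q r := by
  by_cases h : mk3 n a (a + 1) (a + 3) ∈ H
  · exact ⟨_, _, _, by omega, by omega, ha, h, by unfold ServesL; omega⟩
  obtain ⟨x, b, d, y, z, hy, hz, hx, hc, hm⟩ := hH.cross' (by omega) (by omega) ha h
  -- up to renaming, the crossing edge is `{x, a + 2, z}` with `z` outside `[a, a + 3]`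
  have hy2 : (y = a + 2 ∧ (z < a ∨ a + 3 < z) ∨ z = a + 2 ∧ (y < a ∨ a + 3 < y)) ∧
      (x = a ∨ x = a + 1) := by
    unfold Cyc5 at hc
    omega
  obtain ⟨hyz, hx'⟩ := hy2
  clear hc hx
  wlog hy' : y = a + 2 generalizing y z
  · exact this z y hz hy (by rwa [mk3_comm]) (by omega) (by omega)
  subst hy'
  have hz' : z < a ∨ a + 3 < z := by omega
  rcases hz' with hz' | hz'
  · exact ⟨z, x, a + 2, by omega, by omega, hy, by rwa [mk3_rot], by unfold ServesL; omega⟩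
  · exact ⟨x, a + 2, z, by omega, by omega, hz, hm, by unfold ServesL; omega⟩

lemma IsSat.servesR {n : ℕ} {H : Finset (Finset (Fin n))} (hH : IsSat S3cgh 3 H) {a : ℕ}
    (ha : a + 3 < n) :
    ∃ p q r, p < q ∧ q < r ∧ r < n ∧ mk3 n p q r ∈ H ∧ ServesR a p q r := by
  by_cases h : mk3 n a (a + 2) (a + 3) ∈ H
  · exact ⟨_, _, _, by omega, by omega, ha, h, by unfold ServesR; omega⟩
  obtain ⟨x, b, d, y, z, hy, hz, hx, hc, hm⟩ := hH.cross' (by omega) (by omega) ha h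
  -- up to renaming, the crossing edge is `{x, a + 1, z}` with `z` outside `[a, a + 3]`
  have hy2 : (y = a + 1 ∧ (z < a ∨ a + 3 < z) ∨ z = a + 1 ∧ (y < a ∨ a + 3 < y)) ∧
      (x = a + 2 ∨ x = a + 3) := by
    unfold Cyc5 at hc
    omega
  obtain ⟨hyz, hx'⟩ := hy2
  clear hc hx
  wlog hy' : y = a + 1 generalizing y z
  · exact this z y hz hy (by rwa [mk3_comm]) (by omega) (by omega)
  subst hy'
  have hz' : z < a ∨ a + 3 < z := by omega
  rw [mk3_swap] at hm
  rcases hz' with hz' | hz'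
  · exact ⟨z, a + 1, x, by omega, by omega, by omega, by rwa [mk3_rot],
      by unfold ServesR; omega⟩
  · exact ⟨a + 1, x, z, by omega, by omega, hz, hm, by unfold ServesR; omega⟩

/-- Each edge serves at most four times. The extreme case is `{p, p+1, p+3}`, which serves three
times on the left and once on the right, and its mirror image. -/
lemma served_card (n p q r : ℕ) (hpq : p < q) (hqr : q < r) :
    ((range n).filter (ServesL · p q r)).card + ((range n).filter (ServesR · p q r)).card ≤ 4 := by
  have bound : ∀ (P : ℕ → Prop) [DecidablePred P] (s : Finset ℕ), (∀ a, P a → a ∈ s) →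
      ((range n).filter P).card ≤ s.card := fun P _ s h =>
    Finset.card_le_card fun a ha => h a (Finset.mem_filter.1 ha).2
  by_cases hA : q = p + 1 ∧ r = p + 3
  · have h1 := (bound (ServesL · p q r) {p - 1, p, q} (by
      intro a h; unfold ServesL at h; simp; omega)).trans Finset.card_le_three
    have h2 := (bound (ServesR · p q r) {p - 1} (by
      intro a h; unfold ServesR at h; simp; omega)).trans (Finset.card_singleton _).le
    omega
  by_cases hB : q = p + 2 ∧ r = p + 3
  · have h1 := (bound (ServesL · p q r) {q - 1} (by
      intro a h; unfold ServesL at h; simp; omega)).trans (Finset.card_singleton _).le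
    have h2 := (bound (ServesR · p q r) {p - 1, p, q - 1} (by
      intro a h; unfold ServesR at h; simp; omega)).trans Finset.card_le_three
    omega
  · -- otherwise each of the gaps `q - p`, `r - q` accounts for at most one service on either side
    have h1 := (bound (ServesL · p q r)
      {if q = p + 1 then p - 1 else p, if r = q + 1 then q - 1 else q} (by
      intro a h; unfold ServesL at h; simp; split_ifs <;> omega)).trans Finset.card_le_two
    have h2 := (bound (ServesR · p q r)
      {p - 1, q - 1} (by
      intro a h; unfold ServesR at h; simp; omega)).trans Finset.card_le_two
    omega

lemma IsSat.lower {n : ℕ} {H : Finset (Finset (Fin n))} (hH : IsSat S3cgh 3 H) :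
    3 * n ≤ 2 * H.card + 7 := by
  classical
  let T : Finset (ℕ × ℕ × ℕ) := (range n ×ˢ range n ×ˢ range n).filter fun t =>
    t.1 < t.2.1 ∧ t.2.1 < t.2.2 ∧ mk3 n t.1 t.2.1 t.2.2 ∈ H
  have memT : ∀ p q r, (p, q, r) ∈ T ↔ p < q ∧ q < r ∧ r < n ∧ mk3 n p q r ∈ H := by
    intro p q r
    simp only [T, Finset.mem_filter, Finset.mem_product, Finset.mem_range]
    constructor
    · rintro ⟨⟨-, -, h⟩, h1, h2, h3⟩
      exact ⟨h1, h2, h, h3⟩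
    · rintro ⟨h1, h2, h, h3⟩
      exact ⟨⟨by omega, by omega, h⟩, h1, h2, h3⟩
  have hTH : T.card ≤ H.card := by
    refine Finset.card_le_card_of_injOn (fun t => mk3 n t.1 t.2.1 t.2.2) ?_ ?_
    · rintro ⟨p, q, r⟩ h
      exact ((memT p q r).1 h).2.2.2
    · rintro ⟨p, q, r⟩ h ⟨p', q', r'⟩ h' heq
      obtain ⟨h1, h2, h3, -⟩ := (memT p q r).1 h
      obtain ⟨h1', h2', -, -⟩ := (memT p' q' r').1 h'
      obtain ⟨rfl, rfl, rfl⟩ := mk3_inj h1 h2 h3 h1' h2' heq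
      rfl
  let C : ℕ × ℕ × ℕ → Prop := fun t => t.2.1 = t.1 + 1 ∧ t.2.2 = t.1 + 2
  have hC : n - 2 ≤ (T.filter C).card := by
    calc n - 2 = (range (n - 2)).card := (Finset.card_range _).symm
      _ ≤ _ := by
        refine Finset.card_le_card_of_injOn (fun a => (a, a + 1, a + 2)) ?_ ?_
        · intro a ha
          have ha' : a < n - 2 := by simpa using ha
          exact Finset.mem_filter.2
            ⟨(memT ..).2 ⟨by omega, by omega, by omega, hH.consecutive (by omega)⟩, rfl, rfl⟩
        · intro a _ b _ h
          simpa using congrArg Prod.fst h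
  set T' := T.filter (fun t => ¬ C t) with hT'
  have hsplit : (T.filter C).card + T'.card = T.card := Finset.card_filter_add_card_filter_not _
  -- double counting of services between windows and non-consecutive edges
  have hdc : 2 * (n - 3) ≤ 4 * T'.card := by
    have count : ∀ S : ℕ → ℕ → ℕ → ℕ → Prop,
        (∀ a, a + 3 < n → ∃ p q r, p < q ∧ q < r ∧ r < n ∧ mk3 n p q r ∈ H ∧ S a p q r) →
        (∀ a p, ¬ S a p (p + 1) (p + 2)) →
        n - 3 ≤ ∑ t ∈ T', ((range (n - 3)).filter (S · t.1 t.2.1 t.2.2)).card := by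
      intro S hS hS'
      have hsum := Finset.sum_card_bipartiteAbove_eq_sum_card_bipartiteBelow
        (s := range (n - 3)) (t := T') (fun a (t : ℕ × ℕ × ℕ) => S a t.1 t.2.1 t.2.2)
      refine le_of_le_of_eq ?_ hsum
      calc n - 3 = ∑ a ∈ range (n - 3), 1 := by simp
        _ ≤ _ := by
          refine Finset.sum_le_sum fun a ha => ?_
          rw [Finset.mem_range] at ha
          obtain ⟨p, q, r, h1, h2, h3, h4, h5⟩ := hS a (by omega)
          refine Finset.card_pos.2 ⟨(p, q, r), ?_⟩
          simp only [Finset.bipartiteAbove, Finset.mem_filter, hT', memT, C]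
          refine ⟨⟨⟨h1, h2, h3, h4⟩, ?_⟩, h5⟩
          rintro ⟨rfl, rfl⟩
          exact hS' a p h5
    have hL := count ServesL (fun a ha => hH.servesL ha) (by
      intro a p h; unfold ServesL at h; omega)
    have hR := count ServesR (fun a ha => hH.servesR ha) (by
      intro a p h; unfold ServesR at h; omega)
    calc 2 * (n - 3) ≤ ∑ t ∈ T', (((range (n - 3)).filter (ServesL · t.1 t.2.1 t.2.2)).card +
          ((range (n - 3)).filter (ServesR · t.1 t.2.1 t.2.2)).card) := by
            rw [Finset.sum_add_distrib, two_mul]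
            convert Nat.add_le_add hL hR
      _ ≤ ∑ t ∈ T', 4 := by
        refine Finset.sum_le_sum ?_
        rintro ⟨p, q, r⟩ ht
        obtain ⟨h1, h2, -, -⟩ := (memT p q r).1 (Finset.mem_filter.1 ht).1
        exact served_card _ _ _ _ h1 h2
      _ = 4 * T'.card := by rw [Finset.sum_const, smul_eq_mul, mul_comm]
  omega

/-! ### Upper bound -/

/-- The triples `{0, i, i+1}` and `{0, 1, i}`: all links away from `0` are stars centred at `0`,
and the link of `0` is a triangulation. -/
noncomputable def baseFam (n : ℕ) : Finset (Finset (Fin n)) :=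
  open Classical in univ.filter fun s => ∃ i, 1 ≤ i ∧ i + 1 < n ∧ (s = mk3 n 0 i (i + 1) ∨ s = mk3 n 0 1 (i + 1))

lemma mem_baseFam {n : ℕ} {s : Finset (Fin n)} : s ∈ baseFam n ↔
    ∃ i, 1 ≤ i ∧ i + 1 < n ∧ (s = mk3 n 0 i (i + 1) ∨ s = mk3 n 0 1 (i + 1)) := by
  simp [baseFam]

lemma baseFam_free (n : ℕ) : ¬ HasCopy S3cgh (baseFam n) := by
  rw [hasCopy_iff]
  rintro ⟨a, b, c, d, e, ha, hb, hc, hd, he, hcyc, h1, h2⟩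
  rw [mem_baseFam] at h1 h2
  -- an edge contains `0`, and its other two points are consecutive or include `1`
  have key : ∀ x y z : ℕ, x < n → y < n → z < n → x ≠ y → x ≠ z → y ≠ z →
      (∃ i, 1 ≤ i ∧ i + 1 < n ∧ (mk3 n x y z = mk3 n 0 i (i + 1) ∨
        mk3 n x y z = mk3 n 0 1 (i + 1))) →
      (x = 0 ∨ y = 0 ∨ z = 0) ∧ (x = 0 → y = z + 1 ∨ z = y + 1 ∨ y = 1 ∨ z = 1) := by
    rintro x y z hx hy hz hxy hxz hyz ⟨i, hi, hin, h⟩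
    have mem : ∀ j, mk3 n x y z = mk3 n 0 j (i + 1) → ∀ u, u < n → u = x ∨ u = y ∨ u = z →
        u = 0 ∨ u = j ∨ u = i + 1 := by
      intro j h u hu hm
      have hm' : (⟨u, hu⟩ : Fin n) ∈ mk3 n x y z := mem_mk3.2 hm
      rwa [h, mem_mk3] at hm'
    rcases h with h | h <;>
    · have := mem _ h x hx (by simp)
      have := mem _ h y hy (by simp)
      have := mem _ h z hz (by simp)
      omega
  unfold Cyc5 at hcyc
  have k1 := key a b d ha hb hd (by omega) (by omega) (by omega) h1
  have k2 := key a c e ha hc he (by omega) (by omega) (by omega) h2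
  omega

/-- An `S_3`-free family containing `baseFam n` has at most `3 n` edges, since it consists of
triples `{0, i, i+1}`, `{0, 1, i}` and consecutive triples. -/
lemma card_le_of_baseFam {n : ℕ} {H : Finset (Finset (Fin n))} (hu : ∀ h ∈ H, h.card = 3)
    (hf : ¬ HasCopy S3cgh H) (hb : baseFam n ⊆ H) : H.card ≤ 3 * n := by
  have b1 : ∀ i, 1 ≤ i → i + 1 < n → mk3 n 0 i (i + 1) ∈ H := fun i h1 h2 =>
    hb (mem_baseFam.2 ⟨i, h1, h2, Or.inl rfl⟩)
  have b2 : ∀ i, 1 ≤ i → i + 1 < n → mk3 n 0 1 (i + 1) ∈ H := fun i h1 h2 =>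
    hb (mem_baseFam.2 ⟨i, h1, h2, Or.inr rfl⟩)
  have hsub : H ⊆ (range n).image (fun i => mk3 n 0 i (i + 1)) ∪
      (range n).image (fun i => mk3 n 0 1 i) ∪
      (range n).image (fun i => mk3 n i (i + 1) (i + 2)) := by
    intro s hs
    obtain ⟨a, b, c, hab, hbc, hc, rfl⟩ := exists_mk3 (hu s hs)
    simp only [Finset.mem_union, Finset.mem_image, Finset.mem_range]
    by_contra hcon
    push Not at hcon
    obtain ⟨⟨hc1, hc2⟩, hc3⟩ := hcon
    apply hf
    rw [hasCopy_iff]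
    rcases Nat.eq_zero_or_pos a with rfl | ha
    · have h1 : b ≠ 1 := by
        rintro rfl; exact hc2 c hc rfl
      have h2 : c ≠ b + 1 := by
        rintro rfl; exact hc1 b (by omega) rfl
      exact ⟨0, 1, b, b + 1, c, by omega, by omega, by omega, by omega, hc,
        by unfold Cyc5; omega, b2 b (by omega) (by omega), hs⟩
    · by_cases h2 : c = b + 1
      · subst h2
        have h3 : b ≠ a + 1 := by
          rintro rfl; exact hc3 a (by omega) rfl
        refine ⟨b, b + 1, 0, a, b - 1, by omega, by omega, by omega, by omega, by omega,
          by unfold Cyc5; omega, ?_, ?_⟩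
        · rwa [← mk3_rot]
        · have := b1 (b - 1) (by omega) (by omega)
          rw [Nat.sub_add_cancel (by omega)] at this
          rwa [mk3_rot]
      · refine ⟨b, b + 1, c, 0, a, by omega, by omega, by omega, by omega, by omega,
          by unfold Cyc5; omega, ?_, ?_⟩
        · rw [← mk3_rot]; exact b1 b (by omega) (by omega)
        · rwa [← mk3_rot]
  calc H.card ≤ _ := Finset.card_le_card hsub
    _ ≤ _ := (Finset.card_union_le _ _).trans (Nat.add_le_add_right (Finset.card_union_le _ _) _)
    _ ≤ n + n + n := by
      gcongr <;> exact Finset.card_image_le.trans (Finset.card_range n).le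
    _ = 3 * n := by ring

lemma exists_sat (n : ℕ) : ∃ H : Finset (Finset (Fin n)), IsSat S3cgh 3 H ∧ H.card ≤ 3 * n := by
  classical
  let P : Finset (Finset (Fin n)) → Prop := fun H =>
    (∀ h ∈ H, h.card = 3) ∧ ¬ HasCopy S3cgh H ∧ baseFam n ⊆ H
  have hne : (univ.filter P).Nonempty := by
    refine ⟨baseFam n, Finset.mem_filter.2
      ⟨Finset.mem_univ _, fun h hh => ?_, baseFam_free n, subset_rfl⟩⟩
    obtain ⟨i, hi, hin, rfl | rfl⟩ := mem_baseFam.1 hh <;>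
      exact mk3_card (by omega) (by omega) hin
  obtain ⟨H, hH, hmax⟩ := Finset.exists_max_image _ Finset.card hne
  obtain ⟨h1, h2, h3⟩ := (Finset.mem_filter.1 hH).2
  refine ⟨H, ⟨h1, h2, ?_⟩, card_le_of_baseFam h1 h2 h3⟩
  intro e he heH
  by_contra hcon
  have := hmax (insert e H) (by
    simp only [Finset.mem_filter, Finset.mem_univ, true_and]
    refine ⟨?_, hcon, h3.trans (Finset.subset_insert _ _)⟩
    intro h hh
    rcases Finset.mem_insert.1 hh with rfl | hh
    · exact he
    · exact h1 h hh)
  rw [Finset.card_insert_of_notMem heH] at this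
  omega

lemma satNum_bounds (n : ℕ) :
    3 * n ≤ 2 * satNum S3cgh 3 n + 7 ∧ satNum S3cgh 3 n ≤ 3 * n := by
  obtain ⟨H, hH, hcard⟩ := exists_sat n
  constructor
  · obtain ⟨H', hH', hc⟩ := Nat.sInf_mem
      (s := {k | ∃ H : Finset (Finset (Fin n)), IsSat S3cgh 3 H ∧ H.card = k}) ⟨_, H, hH, rfl⟩
    have := hH'.lower
    unfold satNum
    omega
  · exact le_trans (Nat.sInf_le (show H.card ∈ {k | ∃ H : Finset (Finset (Fin n)),
      IsSat S3cgh 3 H ∧ H.card = k} from ⟨H, hH, rfl⟩)) hcard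

-- STATEMENT 8
theorem sat_S3_liminf :
    (3 / 2 : ℝ) ≤ Filter.liminf (fun n : ℕ => (satNum S3cgh 3 n : ℝ) / n) Filter.atTop := by
  have hlow : ∀ n : ℕ, 0 < n → (3 / 2 : ℝ) - 7 / 2 / n ≤ (satNum S3cgh 3 n : ℝ) / n := by
    intro n hn
    have h : (3 * n : ℝ) ≤ 2 * satNum S3cgh 3 n + 7 := by exact_mod_cast (satNum_bounds n).1
    have hn' : (0 : ℝ) < n := by exact_mod_cast hn
    rw [le_div_iff₀ hn', sub_mul, div_mul_cancel₀ _ hn'.ne']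
    linarith
  have hup : ∀ n : ℕ, (satNum S3cgh 3 n : ℝ) / n ≤ 3 := by
    intro n
    have h : (satNum S3cgh 3 n : ℝ) ≤ 3 * n := by exact_mod_cast (satNum_bounds n).2
    exact div_le_of_le_mul₀ (by positivity) (by norm_num) h
  have ht : Filter.Tendsto (fun n : ℕ => (3 / 2 : ℝ) - 7 / 2 / n) Filter.atTop
      (nhds (3 / 2)) := by
    simpa using (tendsto_const_div_atTop_nhds_zero_nat (7 / 2 : ℝ)).const_sub (3 / 2)
  rw [← ht.liminf_eq]
  refine Filter.liminf_le_liminf ?_ ht.isBoundedUnder_ge ?_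
  · filter_upwards [Filter.eventually_gt_atTop 0] with n hn using hlow n hn
  · exact (Filter.isBoundedUnder_of ⟨3, hup⟩).isCoboundedUnder_ge
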